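/- arXiv:2305.15558 — 4 statements merged into one kernel-verified Lean document; each statement's English description precedes it below -/
import Mathlib

section
/- For every P ∈ P(R) and every integer t ≥ 1, the iterates of Algorithm 1 satisfy Δ(λ_t)/μ ≤ B/μ + E_P[C_R] − E_{P^{t-1}}[C_R] + λ_t (E_P[C(·, b^{t-1})] − v) + (1/(2α))(‖P − P^{t-1}‖² − ‖P − P^t‖²) + (α/2)|R|Θ², where Δ(λ_t) := (1/2)(λ_{t+1}² − λ_t²) and B = (1/2) μ² (4Θ² + v²). -/
open Finset

/-!
Let `x` be the proximal step from `z` for the cost `f + l g`, followed by the multiplier update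
`l' = max 0 (l + μ g(x))`. Truncation at `0` does not increase squares, so the drift
`(l'² - l²) / (2μ)` is at most `l g(x) + (μ/2) g(x)²`. The proximal objective is strongly convex, so
its value at any competitor `y` exceeds its minimum by at least `‖y - x‖² / (2α)`; this trades
`f(x) + l g(x)` for `f(y) + l g(y)`. Finally `f(z) - f(x) ≤ L ‖z - x‖` is absorbed by the proximal
term `‖x - z‖² / (2α)` through Young's inequality, at the price of `(α/2) L²`.
-/

section Proximal

variable {E : Type*} [NormedAddCommGroup E]

lemma modulus_le_sub_of_isMinOn [NormedSpace ℝ E] {s : Set E} {φ : ℝ → ℝ} {f : E → ℝ} {x y : E}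
    (hf : UniformConvexOn s φ f) (hmin : IsMinOn f s x) (hx : x ∈ s) (hy : y ∈ s) :
    φ ‖y - x‖ ≤ f y - f x := by
  -- Compare `x` with `(1 - a) • y + a • x`, then let `a → 1`.
  have scaled : ∀ a ∈ Set.Ioo (0 : ℝ) 1, a * φ ‖y - x‖ ≤ f y - f x := by
    intro a ⟨ha0, ha1⟩
    have hb : 0 < 1 - a := sub_pos.2 ha1
    have hmem := hf.1 hy hx hb.le ha0.le (sub_add_cancel 1 a)
    have hle := (isMinOn_iff.1 hmin _ hmem).trans
      (hf.2 hy hx hb.le ha0.le (sub_add_cancel 1 a))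
    simp only [smul_eq_mul] at hle
    refine le_of_mul_le_mul_left ?_ hb
    linarith
  have hlim : Filter.Tendsto (fun a : ℝ ↦ a * φ ‖y - x‖) (nhdsWithin 1 (Set.Iio 1))
      (nhds (φ ‖y - x‖)) :=
    ((continuous_mul_const (φ ‖y - x‖)).tendsto' 1 _ (one_mul _)).mono_left nhdsWithin_le_nhds
  exact le_of_tendsto hlim (Filter.mem_of_superset (Ioo_mem_nhdsLT zero_lt_one) scaled)

variable [InnerProductSpace ℝ E]

lemma strongConvexOn_mul_norm_sub_sq {s : Set E} (hs : Convex ℝ s) (k : ℝ) (z : E) :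
    StrongConvexOn s (2 * k) fun u ↦ k * ‖u - z‖ ^ 2 := by
  have affine : (fun u ↦ k * ‖u - z‖ ^ 2 - 2 * k / 2 * ‖u‖ ^ 2) =
      fun u ↦ innerₛₗ ℝ (-(2 * k) • z) u + k * ‖z‖ ^ 2 := by
    funext u
    rw [norm_sub_sq_real, innerₛₗ_apply_apply, real_inner_smul_left, real_inner_comm]
    ring
  rw [strongConvexOn_iff_convex, affine]
  exact ((innerₛₗ ℝ (-(2 * k) • z)).convexOn hs).add_const _

lemma prox_three_point {s : Set E} {F : E → ℝ} {k : ℝ} {x y z : E} (hF : ConvexOn ℝ s F)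
    (hmin : IsMinOn (fun u ↦ F u + k * ‖u - z‖ ^ 2) s x) (hx : x ∈ s) (hy : y ∈ s) :
    F x + k * ‖x - z‖ ^ 2 + k * ‖y - x‖ ^ 2 ≤ F y + k * ‖y - z‖ ^ 2 := by
  have hconv := (uniformConvexOn_zero.2 hF).add (strongConvexOn_mul_norm_sub_sq hF.1 k z)
  have hgrowth := modulus_le_sub_of_isMinOn hconv hmin hx hy
  simp only [Pi.add_apply, Pi.zero_apply] at hgrowth
  linarith

end Proximal

lemma max_zero_sq_le (x : ℝ) : max 0 x ^ 2 ≤ x ^ 2 :=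
  sq_le_sq.2 <| by
    rw [abs_of_nonneg (le_max_left 0 x)]
    exact max_le (abs_nonneg x) (le_abs_self x)

lemma drift_div_le {μ : ℝ} (hμ : 0 < μ) (l G : ℝ) :
    1 / 2 * (max 0 (l + μ * G) ^ 2 - l ^ 2) / μ ≤ 1 / 2 * μ ^ 2 * G ^ 2 / μ + l * G := by
  rw [div_add' _ _ _ hμ.ne', div_le_div_iff_of_pos_right hμ]
  linarith [max_zero_sq_le (l + μ * G)]

lemma nonneg_of_forall_succ_eq_max_zero {lam u : ℕ → ℝ} (h1 : 0 ≤ lam 1)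
    (hsucc : ∀ t, 1 ≤ t → lam (t + 1) = max 0 (u t)) {t : ℕ} (ht : 1 ≤ t) : 0 ≤ lam t := by
  induction t, ht using Nat.le_induction with
  | base => exact h1
  | succ t ht _ => exact (le_max_left 0 (u t)).trans_eq (hsucc t ht).symm

lemma mul_le_div_add_mul_sq {α : ℝ} (hα : 0 < α) (L r : ℝ) :
    L * r ≤ 1 / (2 * α) * r ^ 2 + α / 2 * L ^ 2 := by
  have hsplit : 1 / (2 * α) * r ^ 2 = α⁻¹ * r ^ 2 / 2 := by ring
  linarith [two_mul_le_add_mul_sq (a := L) (b := r) hα]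

lemma sub_sq_le_sq_add_sq {x v M : ℝ} (hx : x ∈ Set.Icc 0 M) (hv : 0 ≤ v) :
    (x - v) ^ 2 ≤ M ^ 2 + v ^ 2 := by
  have hxM : x ^ 2 ≤ M ^ 2 := pow_le_pow_left₀ hx.1 hx.2 2
  linarith [mul_nonneg hx.1 hv]

section Expectation

variable {R : Type*} [Fintype R]

lemma sum_mul_eq_inner (f : R → ℝ) (p : EuclideanSpace ℝ R) :
    ∑ a, p a * f a = inner ℝ (WithLp.toLp 2 f) p := by
  simp [PiLp.inner_apply]

lemma convexOn_sum_mul {s : Set (EuclideanSpace ℝ R)} (hs : Convex ℝ s) (f : R → ℝ) :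
    ConvexOn ℝ s fun p ↦ ∑ a, p a * f a := by
  simpa only [sum_mul_eq_inner] using! (innerₛₗ ℝ (WithLp.toLp 2 f)).convexOn hs

lemma norm_toLp_le_sqrt_card_mul {f : R → ℝ} {M : ℝ} (hM : 0 ≤ M) (hf : ∀ a, |f a| ≤ M) :
    ‖WithLp.toLp 2 f‖ ≤ √(Fintype.card R) * M := by
  have hsum : ∑ a, f a ^ 2 ≤ Fintype.card R * M ^ 2 := by
    simpa using sum_le_card_nsmul univ (fun a ↦ f a ^ 2) (M ^ 2)
      fun a _ ↦ sq_le_sq.2 ((hf a).trans (le_abs_self M))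
  rw [EuclideanSpace.norm_eq, ← Real.sqrt_sq hM, ← Real.sqrt_mul (Nat.cast_nonneg _)]
  exact Real.sqrt_le_sqrt (by simpa using hsum)

lemma sum_mul_sub_sum_mul_le {f : R → ℝ} {M : ℝ} (hM : 0 ≤ M) (hf : ∀ a, |f a| ≤ M)
    (p q : EuclideanSpace ℝ R) :
    ∑ a, p a * f a - ∑ a, q a * f a ≤ √(Fintype.card R) * M * ‖p - q‖ := by
  rw [sum_mul_eq_inner, sum_mul_eq_inner, ← inner_sub_right]
  refine (real_inner_le_norm _ _).trans ?_
  gcongr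
  exact norm_toLp_le_sqrt_card_mul hM hf

/-- The probability simplex as a subset of Euclidean space, so that proximal steps on it use the
Euclidean norm; `stdSimplex` lives in the function space `R → ℝ` with the sup norm. -/
def euclideanSimplex (R : Type*) [Fintype R] : Set (EuclideanSpace ℝ R) :=
  WithLp.ofLp ⁻¹' stdSimplex ℝ R

lemma convex_euclideanSimplex : Convex ℝ (euclideanSimplex R) :=
  (convex_stdSimplex ℝ R).linear_preimage (WithLp.linearEquiv 2 ℝ (R → ℝ)).toLinearMap

lemma sum_mul_mem_Icc {p : EuclideanSpace ℝ R} (hp : p ∈ euclideanSimplex R) {f : R → ℝ} {m M : ℝ}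
    (hf : ∀ a, f a ∈ Set.Icc m M) : ∑ a, p a * f a ∈ Set.Icc m M :=
  (convex_Icc m M).sum_mem (fun a _ ↦ hp.1 a) hp.2 fun a _ ↦ hf a

end Expectation

theorem stmt1_general {E : Type*} [NormedAddCommGroup E] [InnerProductSpace ℝ E] {K : Set E}
    {f g : E → ℝ} {α μ l l' L M : ℝ} {x y z : E} (hα : 0 < α) (hμ : 0 < μ) (hl : 0 ≤ l)
    (hf : ConvexOn ℝ K f) (hg : ConvexOn ℝ K g) (hx : x ∈ K) (hy : y ∈ K)
    (hmin : IsMinOn (fun u ↦ f u + l * g u + 1 / (2 * α) * ‖u - z‖ ^ 2) K x)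
    (hl' : l' = max 0 (l + μ * g x)) (hL : f z - f x ≤ L * ‖z - x‖) (hM : g x ^ 2 ≤ M) :
    1 / 2 * (l' ^ 2 - l ^ 2) / μ ≤ 1 / 2 * μ ^ 2 * M / μ + f y - f z + l * g y +
      1 / (2 * α) * (‖y - z‖ ^ 2 - ‖y - x‖ ^ 2) + α / 2 * L ^ 2 := by
  have hdrift : 1 / 2 * (l' ^ 2 - l ^ 2) / μ ≤ 1 / 2 * μ ^ 2 * M / μ + l * g x := by
    rw [hl']
    refine (drift_div_le hμ l (g x)).trans ?_
    gcongr
  have hprox := prox_three_point (hf.add (hg.smul hl)) hmin hx hy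
  simp only [Pi.add_apply, smul_eq_mul] at hprox
  have hyoung := mul_le_div_add_mul_sq hα L ‖z - x‖
  rw [norm_sub_rev z x] at hL hyoung
  linarith

theorem stmt1
    {R : Type*} [Fintype R] [Nonempty R]
    (CR : R → ℝ) (CV CT : R → R → ℝ) (Θ v α μ : ℝ)
    (hΘ : 0 < Θ) (hv : 0 < v) (hα : 0 < α) (hμ : 0 < μ)
    (hCR : ∀ a : R, 0 ≤ CR a ∧ CR a ≤ Θ)
    (hCV : ∀ a c : R, 0 ≤ CV a c ∧ CV a c ≤ Θ)
    (hCT : ∀ a c : R, 0 ≤ CT a c ∧ CT a c ≤ Θ)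
    (b : ℕ → R) (P : ℕ → EuclideanSpace ℝ R) (lam : ℕ → ℝ)
    (hP0 : (∀ a : R, 0 ≤ P 0 a) ∧ ∑ a : R, P 0 a = 1)
    (hlam1 : 0 ≤ lam 1)
    (hPmem : ∀ t : ℕ, 1 ≤ t → (∀ a : R, 0 ≤ P t a) ∧ ∑ a : R, P t a = 1)
    (hPmin : ∀ t : ℕ, 1 ≤ t → ∀ Q : EuclideanSpace ℝ R,
      ((∀ a : R, 0 ≤ Q a) ∧ ∑ a : R, Q a = 1) →
      (∑ a : R, P t a * CR a) +
        lam t * ((∑ a : R, P t a * (CV a (b (t-1)) + CT a (b (t-1)))) - v) +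
        (1/(2*α)) * ‖P t - P (t-1)‖^2 ≤
      (∑ a : R, Q a * CR a) +
        lam t * ((∑ a : R, Q a * (CV a (b (t-1)) + CT a (b (t-1)))) - v) +
        (1/(2*α)) * ‖Q - P (t-1)‖^2)
    (hlam : ∀ t : ℕ, 1 ≤ t →
      lam (t+1) = max 0 (lam t + μ * ((∑ a : R, P t a * (CV a (b (t-1)) + CT a (b (t-1)))) - v)))
    (Q : EuclideanSpace ℝ R) (hQ : (∀ a : R, 0 ≤ Q a) ∧ ∑ a : R, Q a = 1)
    (t : ℕ) (ht : 1 ≤ t) :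
    (1/2) * ((lam (t+1))^2 - (lam t)^2) / μ ≤
      ((1/2) * μ^2 * (4*Θ^2 + v^2)) / μ +
      (∑ a : R, Q a * CR a) - (∑ a : R, P (t-1) a * CR a) +
      lam t * ((∑ a : R, Q a * (CV a (b (t-1)) + CT a (b (t-1)))) - v) +
      (1/(2*α)) * (‖Q - P (t-1)‖^2 - ‖Q - P t‖^2) +
      (α/2) * (Fintype.card R : ℝ) * Θ^2 := by
  have hbudget : ((∑ a, P t a * (CV a (b (t-1)) + CT a (b (t-1)))) - v) ^ 2 ≤ 4*Θ^2 + v^2 :=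
    (sub_sq_le_sq_add_sq (sum_mul_mem_Icc (hPmem t ht) fun a ↦
      ⟨add_nonneg (hCV a _).1 (hCT a _).1, add_le_add (hCV a _).2 (hCT a _).2⟩) hv.le).trans_eq
      (by ring)
  have hlip := sum_mul_sub_sum_mul_le hΘ.le
    (fun a ↦ (abs_of_nonneg (hCR a).1).trans_le (hCR a).2) (P (t-1)) (P t)
  simpa only [mul_pow, Real.sq_sqrt (Nat.cast_nonneg (Fintype.card R)), ← mul_assoc] using
    stmt1_general (g := fun p ↦ (∑ a, p a * (CV a (b (t-1)) + CT a (b (t-1)))) - v) hα hμ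
      (nonneg_of_forall_succ_eq_max_zero hlam1 hlam ht)
      (convexOn_sum_mul convex_euclideanSimplex CR)
      ((convexOn_sum_mul convex_euclideanSimplex _).add_const (-v))
      (hPmem t ht) hQ (isMinOn_iff.2 (hPmin t ht)) (hlam t ht) hlip hbudget
end

section
/- Let K ≥ 1 and t ≥ 1 be integers, and let P* ∈ P(R) satisfy the K-slot window constraint Σ_{τ=0}^{K-1} ( E_{P*}[C(·, b^{t+τ-1})] − v ) ≤ 0. Then the dual variables of Algorithm 1 satisfy Σ_{τ=0}^{K-1} λ_{t+τ} ( E_{P*}[C(·, b^{t+τ-1})] − v ) ≤ (1/2) K (K−1) μ (4Θ² + v²). -/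
/-!
Each slot cost lies in `[0, 2Θ]`, so the excess `g = E_p[C(·, b)] − v` satisfies
`g² ≤ 4Θ² + v² =: M²`. Projection onto `[0, ∞)` is nonexpansive, so the dual variable moves by at
most `μM` per slot, and replacing `λ_{t+τ}` by `λ_t` changes the term of slot `τ` by at most `τμM²`.
These errors add up to `K(K − 1)μM² / 2`, and the sum with all multipliers frozen at `λ_t ≥ 0` is
`λ_t` times the nonpositive window sum.
-/

open Finset

lemma abs_max_zero_add_sub_le {G : Type*} [AddCommGroup G] [LinearOrder G] [IsOrderedAddMonoid G]
    {l : G} (hl : 0 ≤ l) (x : G) : |max 0 (l + x) - l| ≤ |x| := by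
  simpa [max_eq_right hl] using abs_max_sub_max_le_max 0 (l + x) 0 l

lemma sq_sub_le_sq_add_sq {𝕜 : Type*} [CommRing 𝕜] [LinearOrder 𝕜] [IsStrictOrderedRing 𝕜]
    {x B v : 𝕜} (hx : x ∈ Set.Icc 0 B) (hv : 0 ≤ v) :
    (x - v) ^ 2 ≤ B ^ 2 + v ^ 2 := by
  have hxB : x ^ 2 ≤ B ^ 2 := pow_le_pow_left₀ hx.1 hx.2 2
  have hxv : 0 ≤ x * v := mul_nonneg hx.1 hv
  linarith [sub_sq x v]

lemma dist_apply_zero_le_of_dist_succ_le {α : Type*} [PseudoMetricSpace α] {u : ℕ → α} {δ : ℝ}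
    (hu : ∀ n, dist (u (n + 1)) (u n) ≤ δ) (n : ℕ) : dist (u n) (u 0) ≤ n * δ := by
  simpa [dist_comm] using dist_le_range_sum_of_dist_le n (d := fun _ => δ)
    fun {k} _ => (dist_comm (u k) _).trans_le (hu k)

lemma sum_range_mul_le_of_abs_succ_sub_le {u g : ℕ → ℝ} {δ M : ℝ} {K : ℕ} (hu₀ : 0 ≤ u 0)
    (hu : ∀ n, |u (n + 1) - u n| ≤ δ) (hg : ∀ n, |g n| ≤ M) (hsum : ∑ n ∈ range K, g n ≤ 0) :
    ∑ n ∈ range K, u n * g n ≤ K.choose 2 * (δ * M) := by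
  have hcost (n : ℕ) : (u n - u 0) * g n ≤ n * (δ * M) := by
    have hdrift : |u n - u 0| ≤ n * δ := by
      simp only [← Real.dist_eq] at hu ⊢
      exact dist_apply_zero_le_of_dist_succ_le hu n
    calc (u n - u 0) * g n ≤ |u n - u 0| * |g n| := (le_abs_self _).trans (abs_mul _ _).le
      _ ≤ n * δ * M := mul_le_mul hdrift (hg n) (abs_nonneg _) ((abs_nonneg _).trans hdrift)
      _ = n * (δ * M) := mul_assoc _ _ _
  calc ∑ n ∈ range K, u n * g n
      = u 0 * ∑ n ∈ range K, g n + ∑ n ∈ range K, (u n - u 0) * g n := by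
        rw [mul_sum, ← sum_add_distrib]
        exact sum_congr rfl fun n _ => by ring
    _ ≤ 0 + ∑ n ∈ range K, n * (δ * M) :=
        add_le_add (mul_nonpos_of_nonneg_of_nonpos hu₀ hsum) (sum_le_sum fun n _ => hcost n)
    _ = K.choose 2 * (δ * M) := by
        rw [zero_add, ← sum_mul, ← Nat.cast_sum, sum_range_id, Nat.choose_two_right]

lemma sum_range_projectedAscent_mul_le {lam x g : ℕ → ℝ} {μ M : ℝ} {K : ℕ} (hμ : 0 ≤ μ)
    (hlam₀ : 0 ≤ lam 0) (hlam : ∀ n, lam (n + 1) = max 0 (lam n + μ * x n))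
    (hx : ∀ n, |x n| ≤ M) (hg : ∀ n, |g n| ≤ M) (hsum : ∑ n ∈ range K, g n ≤ 0) :
    ∑ n ∈ range K, lam n * g n ≤ K.choose 2 * (μ * M ^ 2) := by
  have hlam_nonneg : ∀ n, 0 ≤ lam n
    | 0 => hlam₀
    | n + 1 => hlam n ▸ le_max_left _ _
  have hstep (n : ℕ) : |lam (n + 1) - lam n| ≤ μ * M := by
    calc |lam (n + 1) - lam n| ≤ |μ * x n| :=
          hlam n ▸ abs_max_zero_add_sub_le (hlam_nonneg n) _
      _ = μ * |x n| := by rw [abs_mul, abs_of_nonneg hμ]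
      _ ≤ μ * M := mul_le_mul_of_nonneg_left (hx n) hμ
  simpa only [sq, mul_assoc] using sum_range_mul_le_of_abs_succ_sub_le hlam₀ hstep hg hsum

/-- In Algorithm 1, `D` is the simplex, `x s = P^s`, `f s p = E_p[C(·, b^{s-1})]` and `q = P*`. -/
theorem stmt6_general {X : Type*} {D : Set X} {f : ℕ → X → ℝ} {B v μ : ℝ}
    (hv : 0 ≤ v) (hμ : 0 ≤ μ) (hf : ∀ s, Set.MapsTo (f s) D (Set.Icc 0 B))
    {x : ℕ → X} {lam : ℕ → ℝ} (hx : ∀ s, 1 ≤ s → x s ∈ D) (hlam₁ : 0 ≤ lam 1)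
    (hlam : ∀ s, 1 ≤ s → lam (s + 1) = max 0 (lam s + μ * (f s (x s) - v)))
    {K t : ℕ} (ht : 1 ≤ t) {q : X} (hq : q ∈ D)
    (hwin : ∑ τ ∈ range K, (f (t + τ) q - v) ≤ 0) :
    ∑ τ ∈ range K, lam (t + τ) * (f (t + τ) q - v) ≤
      1 / 2 * K * (K - 1) * μ * (B ^ 2 + v ^ 2) := by
  have hlam_t : 0 ≤ lam t :=
    Nat.le_induction hlam₁ (fun s hs _ => hlam s hs ▸ le_max_left _ _) t ht
  have hexcess (s : ℕ) {y : X} (hy : y ∈ D) : |f s y - v| ≤ √(B ^ 2 + v ^ 2) :=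
    Real.abs_le_sqrt (sq_sub_le_sq_add_sq (hf s hy) hv)
  have hslot (τ : ℕ) : 1 ≤ t + τ := ht.trans (Nat.le_add_right t τ)
  calc ∑ τ ∈ range K, lam (t + τ) * (f (t + τ) q - v)
      ≤ K.choose 2 * (μ * √(B ^ 2 + v ^ 2) ^ 2) :=
        sum_range_projectedAscent_mul_le (lam := fun τ => lam (t + τ)) hμ hlam_t
          (fun τ => hlam (t + τ) (hslot τ)) (fun τ => hexcess _ (hx _ (hslot τ)))
          (fun _ => hexcess _ hq) hwin
    _ = 1 / 2 * K * (K - 1) * μ * (B ^ 2 + v ^ 2) := by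
        rw [Real.sq_sqrt (by positivity), Nat.cast_choose_two]
        ring

theorem stmt6
    {R : Type*} [Fintype R] [Nonempty R]
    (CR : R → ℝ) (CV CT : R → R → ℝ) (Θ v α μ : ℝ)
    (hΘ : 0 < Θ) (hv : 0 < v) (hα : 0 < α) (hμ : 0 < μ)
    (hCR : ∀ a : R, 0 ≤ CR a ∧ CR a ≤ Θ)
    (hCV : ∀ a c : R, 0 ≤ CV a c ∧ CV a c ≤ Θ)
    (hCT : ∀ a c : R, 0 ≤ CT a c ∧ CT a c ≤ Θ)
    (b : ℕ → R) (P : ℕ → EuclideanSpace ℝ R) (lam : ℕ → ℝ)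
    (hP0 : (∀ a : R, 0 ≤ P 0 a) ∧ ∑ a : R, P 0 a = 1)
    (hlam1 : 0 ≤ lam 1)
    (hPmem : ∀ t : ℕ, 1 ≤ t → (∀ a : R, 0 ≤ P t a) ∧ ∑ a : R, P t a = 1)
    (hPmin : ∀ t : ℕ, 1 ≤ t → ∀ Q : EuclideanSpace ℝ R,
      ((∀ a : R, 0 ≤ Q a) ∧ ∑ a : R, Q a = 1) →
      (∑ a : R, P t a * CR a) +
        lam t * ((∑ a : R, P t a * (CV a (b (t-1)) + CT a (b (t-1)))) - v) +
        (1/(2*α)) * ‖P t - P (t-1)‖^2 ≤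
      (∑ a : R, Q a * CR a) +
        lam t * ((∑ a : R, Q a * (CV a (b (t-1)) + CT a (b (t-1)))) - v) +
        (1/(2*α)) * ‖Q - P (t-1)‖^2)
    (hlam : ∀ t : ℕ, 1 ≤ t →
      lam (t+1) = max 0 (lam t + μ * ((∑ a : R, P t a * (CV a (b (t-1)) + CT a (b (t-1)))) - v)))
    (K t : ℕ) (hK : 1 ≤ K) (ht : 1 ≤ t)
    (Pstar : EuclideanSpace ℝ R)
    (hPstar : (∀ a : R, 0 ≤ Pstar a) ∧ ∑ a : R, Pstar a = 1)
    (hwin : ∑ τ ∈ Finset.range K,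
        ((∑ a : R, Pstar a * (CV a (b (t+τ-1)) + CT a (b (t+τ-1)))) - v) ≤ 0) :
    ∑ τ ∈ Finset.range K,
        lam (t+τ) * ((∑ a : R, Pstar a * (CV a (b (t+τ-1)) + CT a (b (t+τ-1)))) - v) ≤
      (1/2) * (K:ℝ) * ((K:ℝ) - 1) * μ * (4*Θ^2 + v^2) := by
  have hC (a c : R) : CV a c + CT a c ∈ Set.Icc 0 (2 * Θ) :=
    ⟨add_nonneg (hCV a c).1 (hCT a c).1, two_mul Θ ▸ add_le_add (hCV a c).2 (hCT a c).2⟩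
  have hbound := stmt6_general (D := stdSimplex ℝ R) (x := fun s => P s)
    (f := fun s p => ∑ a, p a * (CV a (b (s - 1)) + CT a (b (s - 1)))) hv.le hμ.le
    (fun _ _ hp => (convex_Icc 0 (2 * Θ)).sum_mem (fun a _ => hp.1 a) hp.2 fun a _ => hC a _)
    hPmem hlam1 hlam ht hPstar hwin
  rwa [show (2 * Θ) ^ 2 = 4 * Θ ^ 2 by ring] at hbound
end

section
/- Assume λ_1 = 0. Then for all integers 1 ≤ K ≤ T, the dual variables of Algorithm 1 satisfy Σ_{τ=0}^{K-1} Σ_{t=1}^{T-K} Δ(λ_{t+τ})/μ ≥ − μ (2Θ + v)² (K−1) K (2K−1) / 6, where Δ(λ_s) := (1/2)(λ_{s+1}² − λ_s²). -/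
/-!
For fixed `τ` the sum over `t` telescopes to `(λ_{T-K+τ+1}² - λ_{τ+1}²) / (2μ)`, which is at least
`-λ_{τ+1}² / (2μ)`. Each dual step raises `λ` by at most `μ (2Θ + v)`, because the expected cost is
at most `2Θ`; hence `λ_1 = 0` gives `0 ≤ λ_{τ+1} ≤ τ μ (2Θ + v)`, and summing `τ²` over `τ < K`
yields the bound, with a factor `1/2` to spare.
-/

open Finset

theorem sum_Icc_one_sub_shift {G : Type*} [AddCommGroup G] (f : ℕ → G) (N τ : ℕ) :
    ∑ t ∈ Icc 1 N, (f (t + τ + 1) - f (t + τ)) = f (N + τ + 1) - f (τ + 1) := by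
  simpa only [Ico_add_one_right_eq_Icc, Nat.add_right_comm _ 1 τ, zero_add] using
    sum_Ico_sub (fun t ↦ f (t + τ)) (Nat.le_add_left 1 N)

theorem le_nsmul_of_succ_le_add {M : Type*} [AddMonoid M] [Preorder M] [AddRightMono M]
    {x : ℕ → M} {c : M} (hzero : x 0 ≤ 0) (hsucc : ∀ n, x (n + 1) ≤ x n + c) (n : ℕ) :
    x n ≤ n • c := by
  induction n with
  | zero => simpa only [zero_nsmul] using hzero
  | succ n ih => simpa only [succ_nsmul] using (hsucc n).trans (add_le_add_left ih c)

theorem sum_range_sq {F : Type*} [Field F] [CharZero F] (K : ℕ) :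
    ∑ τ ∈ range K, (τ : F) ^ 2 = ((K : F) - 1) * K * (2 * K - 1) / 6 := by
  induction K with
  | zero => simp
  | succ K ih =>
    rw [sum_range_succ, ih]
    push_cast
    ring

section LinearOrderedField

variable {𝕜 : Type*} [Field 𝕜] [LinearOrder 𝕜] [IsStrictOrderedRing 𝕜]

theorem sub_one_mul_self_mul_two_mul_sub_one_nonneg (K : ℕ) :
    0 ≤ ((K : 𝕜) - 1) * K * (2 * K - 1) := by
  have hsum : 0 ≤ ∑ τ ∈ range K, (τ : 𝕜) ^ 2 := sum_nonneg fun τ _ ↦ sq_nonneg _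
  rw [sum_range_sq] at hsum
  linarith

theorem sum_mul_le_of_mem_stdSimplex {ι : Type*} [Fintype ι] {p f : ι → 𝕜} {B : 𝕜}
    (hp : p ∈ stdSimplex 𝕜 ι) (hf : ∀ i, f i ≤ B) : ∑ i, p i * f i ≤ B :=
  (convex_Iic B).sum_mem (fun i _ ↦ hp.1 i) hp.2 fun i _ ↦ hf i

theorem neg_le_sum_sum_sq_sub_sq {x : ℕ → 𝕜} {c : 𝕜} (hone : x 1 = 0)
    (hnonneg : ∀ t, 1 ≤ t → 0 ≤ x t) (hsucc : ∀ t, 1 ≤ t → x (t + 1) ≤ x t + c) (K N : ℕ) :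
    -(c ^ 2 * (((K : 𝕜) - 1) * K * (2 * K - 1) / 6)) ≤
      ∑ τ ∈ range K, ∑ t ∈ Icc 1 N, (x (t + τ + 1) ^ 2 - x (t + τ) ^ 2) := by
  have hgrowth (τ : ℕ) : x (τ + 1) ≤ τ * c := by
    simpa only [nsmul_eq_mul] using
      le_nsmul_of_succ_le_add (x := fun n ↦ x (n + 1)) hone.le
        (fun n ↦ hsucc (n + 1) (Nat.le_add_left 1 n)) τ
  have hsq (τ : ℕ) : x (τ + 1) ^ 2 ≤ c ^ 2 * (τ : 𝕜) ^ 2 := by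
    rw [← mul_pow, mul_comm c]
    exact pow_le_pow_left₀ (hnonneg _ (Nat.le_add_left 1 τ)) (hgrowth τ) 2
  rw [← sum_range_sq, mul_sum, ← sum_neg_distrib]
  refine sum_le_sum fun τ _ ↦ ?_
  rw [sum_Icc_one_sub_shift fun s ↦ x s ^ 2]
  linarith [hsq τ, sq_nonneg (x (N + τ + 1))]

theorem stmt7_general {μ G : 𝕜} (hμ : 0 < μ) (hG : 0 ≤ G) {g lam : ℕ → 𝕜}
    (hg : ∀ t, 1 ≤ t → g t ≤ G) (hlam1 : lam 1 = 0)
    (hlam : ∀ t, 1 ≤ t → lam (t + 1) = max 0 (lam t + μ * g t)) (K N : ℕ) :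
    -(μ * G ^ 2 * ((K : 𝕜) - 1) * K * (2 * K - 1) / 12) ≤
      ∑ τ ∈ range K, ∑ t ∈ Icc 1 N, (1 / 2) * (lam (t + τ + 1) ^ 2 - lam (t + τ) ^ 2) / μ := by
  have hnonneg (t : ℕ) (ht : 1 ≤ t) : 0 ≤ lam t := by
    induction t, ht using Nat.le_induction with
    | base => exact hlam1.ge
    | succ t ht _ => exact hlam t ht ▸ le_max_left _ _
  have hsucc (t : ℕ) (ht : 1 ≤ t) : lam (t + 1) ≤ lam t + μ * G := by
    rw [hlam t ht]
    exact max_le (add_nonneg (hnonneg t ht) (by positivity)) (by gcongr; exact hg t ht)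
  simp only [← sum_div, ← mul_sum]
  rw [le_div_iff₀ hμ]
  linarith [neg_le_sum_sum_sq_sub_sq hlam1 hnonneg hsucc K N]

end LinearOrderedField

theorem stmt7
    {R : Type*} [Fintype R] [Nonempty R]
    (CR : R → ℝ) (CV CT : R → R → ℝ) (Θ v α μ : ℝ)
    (hΘ : 0 < Θ) (hv : 0 < v) (hα : 0 < α) (hμ : 0 < μ)
    (hCR : ∀ a : R, 0 ≤ CR a ∧ CR a ≤ Θ)
    (hCV : ∀ a c : R, 0 ≤ CV a c ∧ CV a c ≤ Θ)
    (hCT : ∀ a c : R, 0 ≤ CT a c ∧ CT a c ≤ Θ)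
    (b : ℕ → R) (P : ℕ → EuclideanSpace ℝ R) (lam : ℕ → ℝ)
    (hP0 : (∀ a : R, 0 ≤ P 0 a) ∧ ∑ a : R, P 0 a = 1)
    (hlam1 : lam 1 = 0)
    (hPmem : ∀ t : ℕ, 1 ≤ t → (∀ a : R, 0 ≤ P t a) ∧ ∑ a : R, P t a = 1)
    (hPmin : ∀ t : ℕ, 1 ≤ t → ∀ Q : EuclideanSpace ℝ R,
      ((∀ a : R, 0 ≤ Q a) ∧ ∑ a : R, Q a = 1) →
      (∑ a : R, P t a * CR a) +
        lam t * ((∑ a : R, P t a * (CV a (b (t-1)) + CT a (b (t-1)))) - v) +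
        (1/(2*α)) * ‖P t - P (t-1)‖^2 ≤
      (∑ a : R, Q a * CR a) +
        lam t * ((∑ a : R, Q a * (CV a (b (t-1)) + CT a (b (t-1)))) - v) +
        (1/(2*α)) * ‖Q - P (t-1)‖^2)
    (hlam : ∀ t : ℕ, 1 ≤ t →
      lam (t+1) = max 0 (lam t + μ * ((∑ a : R, P t a * (CV a (b (t-1)) + CT a (b (t-1)))) - v)))
    (K T : ℕ) (hK : 1 ≤ K) (hKT : K ≤ T) :
    -(μ * (2*Θ + v)^2 * ((K:ℝ) - 1) * (K:ℝ) * (2*(K:ℝ) - 1) / 6) ≤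
      ∑ τ ∈ Finset.range K, ∑ t ∈ Finset.Icc 1 (T - K),
        (1/2) * ((lam (t+τ+1))^2 - (lam (t+τ))^2) / μ := by
  have hcost (t : ℕ) (ht : 1 ≤ t) :
      ∑ a, P t a * (CV a (b (t - 1)) + CT a (b (t - 1))) ≤ Θ + Θ :=
    sum_mul_le_of_mem_stdSimplex (hPmem t ht) fun a ↦ add_le_add (hCV a _).2 (hCT a _).2
  have hsharp := stmt7_general (G := 2 * Θ + v) hμ (by positivity)
    (fun t ht ↦ by linarith [hcost t ht]) hlam1 hlam K (T - K)
  have hslack := mul_nonneg (by positivity : 0 ≤ μ * (2 * Θ + v) ^ 2)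
    (sub_one_mul_self_mul_two_mul_sub_one_nonneg K)
  linarith
end

section
/- Assume Slater's condition: there exist P̃ ∈ P(R) and η > 0 such that E_{P̃}[C(·, b)] − v ≤ −η for every b ∈ R. Let ℵ ≥ 1 and T ≥ ℵ + 1 be integers. If the dual variables of Algorithm 1 satisfy λ_{T+1} > λ_{T−ℵ}, then η Σ_{t=T−ℵ}^{T} λ_t ≤ (ℵ+1) ( B/μ + (α/2)|R|Θ² + Θ ) + 1/α, where B = (1/2) μ² (4Θ² + v²). -/
open Finset

/-!
Fix the Slater point `y`. The proximal objective is strongly convex, so its minimizer `x (t + 1)`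
beats `y`, whose penalty is at most `-η`, with the additional margin `‖y - x (t + 1)‖² / (2α)`.
Squaring the dual update bounds `lam (t + 2)² - lam (t + 1)²` by `2μ lam (t + 1)` times the penalty
of `x (t + 1)`, up to a bounded error. Adding the two, the Lyapunov function
`lam (t + 1)² / (2μ) + ‖y - x t‖² / (2α)` decreases by at least `η lam (t + 1)`, up to a constant,
in each step. Over a window in which the dual variable does not decrease, the total drop is at most
the initial distance term.
-/

section StrongConvexity

variable {E : Type*} [NormedAddCommGroup E] {X : Set E} {F : E → ℝ}

lemma strongConvexOn_add_mul_norm_sub_sq [InnerProductSpace ℝ E] (hF : ConvexOn ℝ X F) (c : ℝ)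
    (p : E) : StrongConvexOn X (2 * c) fun z => F z + c * ‖z - p‖ ^ 2 := by
  have haffine : ConvexOn ℝ X fun z => F z + (-(2 * c)) * inner ℝ p z + c * ‖p‖ ^ 2 :=
    (hF.add (((-(2 * c)) • innerₗ E p).convexOn hF.1)).add_const _
  refine strongConvexOn_iff_convex.2 (haffine.congr fun z _ => ?_)
  rw [norm_sub_sq_real, real_inner_comm]
  ring

lemma add_mul_norm_sub_sq_le_of_isMinOn [NormedSpace ℝ E] {m : ℝ} {x y : E}
    (hF : StrongConvexOn X m F) (hmin : IsMinOn F X x) (hx : x ∈ X) (hy : y ∈ X) :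
    F x + m / 2 * ‖y - x‖ ^ 2 ≤ F y := by
  have hsegment : ∀ s ∈ Set.Ioo (0 : ℝ) 1, F x + (1 - s) * (m / 2 * ‖y - x‖ ^ 2) ≤ F y := by
    rintro s ⟨hs0, hs1⟩
    have hle := isMinOn_iff.1 hmin _ (hF.1 hy hx hs0.le (sub_nonneg.2 hs1.le) (by ring))
    have hconv := hF.2 hy hx hs0.le (sub_nonneg.2 hs1.le) (by ring)
    simp only [smul_eq_mul] at hconv
    refine le_of_mul_le_mul_left ?_ hs0
    linarith
  have hlim : Filter.Tendsto (fun s : ℝ => F x + (1 - s) * (m / 2 * ‖y - x‖ ^ 2))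
      (nhdsWithin 0 (Set.Ioi 0)) (nhds (F x + (1 - 0) * (m / 2 * ‖y - x‖ ^ 2))) :=
    Continuous.tendsto' (by fun_prop) _ _ rfl |>.mono_left nhdsWithin_le_nhds
  rw [sub_zero, one_mul] at hlim
  exact le_of_tendsto hlim (Filter.mem_of_superset (Ioo_mem_nhdsGT one_pos) hsegment)

end StrongConvexity

lemma sq_max_zero_le (r : ℝ) : max 0 r ^ 2 ≤ r ^ 2 :=
  sq_le_sq.2 (by simpa using abs_max_le_max_abs_abs (a := 0) (b := r))

/-- The online proximal primal-dual method on a feasible set `X`, with cost `f` and penalty `g t`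
revealed after round `t`; Algorithm 1 is the case of the probability simplex. As in the paper, the
dual variables start at `lam 1`, and `lam (t + 1)` is used to compute `x (t + 1)`; the value `lam 0`
is irrelevant. -/
structure IsProximalPrimalDual {E : Type*} [NormedAddCommGroup E] (X : Set E) (f : E → ℝ)
    (g : ℕ → E → ℝ) (α μ : ℝ) (x : ℕ → E) (lam : ℕ → ℝ) : Prop where
  mem : ∀ t, x t ∈ X
  isMinOn : ∀ t, IsMinOn
    (fun z => f z + lam (t + 1) * g t z + 1 / (2 * α) * ‖z - x t‖ ^ 2) X (x (t + 1))
  dual_one_nonneg : 0 ≤ lam 1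
  dual_update : ∀ t, lam (t + 2) = max 0 (lam (t + 1) + μ * g t (x (t + 1)))

/-- The Lyapunov function of the primal-dual method relative to a comparison point `y`: the dual
energy plus the proximal distance to `y`. The index of `lam` is shifted because `lam (t + 1)` and
`x t` are the data entering round `t + 1`. -/
noncomputable def lyapunov {E : Type*} [NormedAddCommGroup E] (α μ : ℝ) (x : ℕ → E) (lam : ℕ → ℝ)
    (y : E) (t : ℕ) : ℝ :=
  lam (t + 1) ^ 2 / (2 * μ) + 1 / (2 * α) * ‖y - x t‖ ^ 2

namespace IsProximalPrimalDual

variable {E : Type*} [NormedAddCommGroup E] {X : Set E} {f : E → ℝ} {g : ℕ → E → ℝ}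
  {α μ η Θ Γ D : ℝ} {x : ℕ → E} {lam : ℕ → ℝ} {y : E}

lemma dual_nonneg (h : IsProximalPrimalDual X f g α μ x lam) : ∀ t, 0 ≤ lam (t + 1)
  | 0 => h.dual_one_nonneg
  | t + 1 => h.dual_update t ▸ le_max_left _ _

lemma dual_drift_le (h : IsProximalPrimalDual X f g α μ x lam) (hμ : 0 < μ) (t : ℕ) :
    lam (t + 2) ^ 2 / (2 * μ) ≤ lam (t + 1) ^ 2 / (2 * μ) +
      lam (t + 1) * g t (x (t + 1)) + μ / 2 * g t (x (t + 1)) ^ 2 := by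
  calc lam (t + 2) ^ 2 / (2 * μ) ≤ (lam (t + 1) + μ * g t (x (t + 1))) ^ 2 / (2 * μ) := by
        rw [h.dual_update]
        gcongr ?_ / _
        exact sq_max_zero_le _
    _ = _ := by field_simp; ring

lemma lyapunov_sub_le (h : IsProximalPrimalDual X f g α μ x lam) {m n : ℕ} (hα : 0 < α)
    (hμ : 0 < μ) (hD : ‖y - x m‖ ^ 2 ≤ D) (hlam : lam (m + 1) ≤ lam (n + 1)) :
    lyapunov α μ x lam y m - lyapunov α μ x lam y n ≤ D / (2 * α) := by
  have hdual : lam (m + 1) ^ 2 / (2 * μ) ≤ lam (n + 1) ^ 2 / (2 * μ) := by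
    gcongr
    exact h.dual_nonneg m
  have hdist : 1 / (2 * α) * ‖y - x m‖ ^ 2 ≤ D / (2 * α) := by
    rw [one_div_mul_eq_div]
    gcongr
  have hdist_nonneg : 0 ≤ 1 / (2 * α) * ‖y - x n‖ ^ 2 := by positivity
  unfold lyapunov
  linarith

variable [InnerProductSpace ℝ E]

lemma primal_descent (h : IsProximalPrimalDual X f g α μ x lam) {t : ℕ} (hf : ConvexOn ℝ X f)
    (hg : ConvexOn ℝ X (g t)) (hy : y ∈ X) :
    f (x (t + 1)) + lam (t + 1) * g t (x (t + 1)) + 1 / (2 * α) * ‖x (t + 1) - x t‖ ^ 2 +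
        1 / (2 * α) * ‖y - x (t + 1)‖ ^ 2 ≤
      f y + lam (t + 1) * g t y + 1 / (2 * α) * ‖y - x t‖ ^ 2 := by
  have hstrong := strongConvexOn_add_mul_norm_sub_sq (hf.add (hg.smul (h.dual_nonneg t)))
    (1 / (2 * α)) (x t)
  simpa only [Pi.add_apply, smul_eq_mul, mul_div_cancel_left₀ _ (two_ne_zero' ℝ)] using
    add_mul_norm_sub_sq_le_of_isMinOn hstrong (h.isMinOn t) (h.mem (t + 1)) hy

lemma mul_dual_le_lyapunov_sub (h : IsProximalPrimalDual X f g α μ x lam) {t : ℕ} (hα : 0 < α)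
    (hμ : 0 < μ) (hf : ConvexOn ℝ X f) (hg : ConvexOn ℝ X (g t)) (hy : y ∈ X)
    (hslater : g t y ≤ -η) (hΘ : f y - f (x (t + 1)) ≤ Θ) (hΓ : g t (x (t + 1)) ^ 2 ≤ Γ) :
    η * lam (t + 1) ≤
      μ / 2 * Γ + Θ + (lyapunov α μ x lam y t - lyapunov α μ x lam y (t + 1)) := by
  have hprimal := h.primal_descent hf hg hy
  have hdual := h.dual_drift_le hμ t
  have hpenalty : lam (t + 1) * g t y ≤ lam (t + 1) * -η :=
    mul_le_mul_of_nonneg_left hslater (h.dual_nonneg t)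
  have herror : μ / 2 * g t (x (t + 1)) ^ 2 ≤ μ / 2 * Γ := by gcongr
  have hmove : 0 ≤ 1 / (2 * α) * ‖x (t + 1) - x t‖ ^ 2 := by positivity
  unfold lyapunov
  linarith

lemma mul_sum_dual_le_lyapunov_sub (h : IsProximalPrimalDual X f g α μ x lam) (hα : 0 < α)
    (hμ : 0 < μ) (hf : ConvexOn ℝ X f) (hg : ∀ t, ConvexOn ℝ X (g t)) (hy : y ∈ X)
    (hslater : ∀ t, g t y ≤ -η) (hΘ : ∀ z ∈ X, f y - f z ≤ Θ)
    (hΓ : ∀ t, ∀ z ∈ X, g t z ^ 2 ≤ Γ) (m n : ℕ) :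
    η * ∑ i ∈ range n, lam (m + i + 1) ≤
      n * (μ / 2 * Γ + Θ) + (lyapunov α μ x lam y m - lyapunov α μ x lam y (m + n)) := by
  calc η * ∑ i ∈ range n, lam (m + i + 1)
      ≤ ∑ i ∈ range n, (μ / 2 * Γ + Θ +
          (lyapunov α μ x lam y (m + i) - lyapunov α μ x lam y (m + (i + 1)))) := by
        rw [mul_sum]
        exact sum_le_sum fun i _ => h.mul_dual_le_lyapunov_sub hα hμ hf (hg _) hy (hslater _)
          (hΘ _ (h.mem _)) (hΓ _ _ (h.mem _))
    _ = _ := by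
        rw [sum_add_distrib, sum_range_sub' fun i => lyapunov α μ x lam y (m + i)]
        simp only [sum_const, card_range, nsmul_eq_mul, add_zero]

end IsProximalPrimalDual

theorem stmt14_general {E : Type*} [NormedAddCommGroup E] [InnerProductSpace ℝ E] {X : Set E}
    {f : E → ℝ} {g : ℕ → E → ℝ} {α μ η Θ Γ D : ℝ} {x : ℕ → E} {lam : ℕ → ℝ} {y : E} {ℵ T : ℕ}
    (h : IsProximalPrimalDual X f g α μ x lam) (hα : 0 < α) (hμ : 0 < μ) (hf : ConvexOn ℝ X f)
    (hg : ∀ t, ConvexOn ℝ X (g t)) (hy : y ∈ X) (hslater : ∀ t, g t y ≤ -η)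
    (hΘ : ∀ z ∈ X, f y - f z ≤ Θ) (hΓ : ∀ t, ∀ z ∈ X, g t z ^ 2 ≤ Γ)
    (hD : ∀ z ∈ X, ‖y - z‖ ^ 2 ≤ D) (hT : ℵ + 1 ≤ T) (hlam : lam (T - ℵ) ≤ lam (T + 1)) :
    η * ∑ t ∈ Icc (T - ℵ) T, lam t ≤ (ℵ + 1) * (μ / 2 * Γ + Θ) + D / (2 * α) := by
  obtain ⟨m, rfl⟩ := Nat.exists_eq_add_of_le' hT
  have hstart : m + (ℵ + 1) - ℵ = m + 1 := by omega
  have hwindow : ∑ t ∈ Icc (m + 1) (m + (ℵ + 1)), lam t =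
      ∑ i ∈ range (ℵ + 1), lam (m + i + 1) := by
    rw [← Ico_add_one_right_eq_Icc, sum_Ico_eq_sum_range, add_right_comm, Nat.add_sub_cancel_left]
    simp only [add_right_comm]
  rw [hstart] at hlam ⊢
  have hsum := h.mul_sum_dual_le_lyapunov_sub hα hμ hf hg hy hslater hΘ hΓ m (ℵ + 1)
  have hdrop := h.lyapunov_sub_le hα hμ (hD _ (h.mem m)) hlam
  rw [hwindow]
  push_cast at hsum
  linarith

section Simplex

variable {R : Type*} [Fintype R]

/-- The probability simplex `P(R)`, as a subset of Euclidean space because the algorithm measures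
distances in the Euclidean norm (`stdSimplex` lives in `R → ℝ`, which carries the sup norm). -/
def probSimplex (R : Type*) [Fintype R] : Set (EuclideanSpace ℝ R) :=
  WithLp.ofLp ⁻¹' stdSimplex ℝ R

/-- The expectation `E_p[f]` as a linear functional of `p`, defined for arbitrary vectors `p`. -/
def expectation (f : R → ℝ) : EuclideanSpace ℝ R →ₗ[ℝ] ℝ where
  toFun p := ∑ a, p a * f a
  map_add' p q := by simp only [PiLp.add_apply, add_mul, sum_add_distrib]
  map_smul' c p := by
    simp only [PiLp.smul_apply, smul_eq_mul, mul_assoc, mul_sum, RingHom.id_apply]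

lemma convex_probSimplex : Convex ℝ (probSimplex R) :=
  (convex_stdSimplex ℝ R).linear_preimage (WithLp.linearEquiv 2 ℝ (R → ℝ)).toLinearMap

lemma convexOn_expectation (f : R → ℝ) : ConvexOn ℝ (probSimplex R) (expectation f) :=
  (expectation f).convexOn convex_probSimplex

lemma expectation_mem_Icc {p : EuclideanSpace ℝ R} (hp : p ∈ probSimplex R) {f : R → ℝ} {l u : ℝ}
    (hf : ∀ a, f a ∈ Set.Icc l u) : expectation f p ∈ Set.Icc l u :=
  (convex_Icc l u).sum_mem (fun a _ => hp.1 a) hp.2 fun a _ => hf a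

lemma norm_sq_le_one_of_mem_probSimplex {p : EuclideanSpace ℝ R} (hp : p ∈ probSimplex R) :
    ‖p‖ ^ 2 ≤ 1 := by
  calc ‖p‖ ^ 2 = ∑ a, p a ^ 2 := EuclideanSpace.real_norm_sq_eq p
    _ ≤ ∑ a, p a := sum_le_sum fun a _ =>
        pow_le_of_le_one (hp.1 a) (mem_Icc_of_mem_stdSimplex hp a).2 two_ne_zero
    _ = 1 := hp.2

lemma norm_sub_sq_le_two_of_mem_probSimplex {p q : EuclideanSpace ℝ R} (hp : p ∈ probSimplex R)
    (hq : q ∈ probSimplex R) : ‖p - q‖ ^ 2 ≤ 2 := by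
  have hinner : 0 ≤ inner ℝ p q := by
    rw [PiLp.inner_apply]
    exact sum_nonneg fun a _ => mul_nonneg (hq.1 a) (hp.1 a)
  rw [norm_sub_sq_real]
  linarith [norm_sq_le_one_of_mem_probSimplex hp, norm_sq_le_one_of_mem_probSimplex hq]

end Simplex

lemma sub_sq_le_sq_add_sq_s14 {r s K : ℝ} (hr : r ∈ Set.Icc 0 K) (hs : 0 ≤ s) :
    (r - s) ^ 2 ≤ K ^ 2 + s ^ 2 := by
  have hsq : r ^ 2 ≤ K ^ 2 := pow_le_pow_left₀ hr.1 hr.2 2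
  have hmul : 0 ≤ r * s := mul_nonneg hr.1 hs
  linarith [sub_sq r s]

theorem stmt14
    {R : Type*} [Fintype R] [Nonempty R]
    (CR : R → ℝ) (CV CT : R → R → ℝ) (Θ v α μ : ℝ)
    (hΘ : 0 < Θ) (hv : 0 < v) (hα : 0 < α) (hμ : 0 < μ)
    (hCR : ∀ a : R, 0 ≤ CR a ∧ CR a ≤ Θ)
    (hCV : ∀ a c : R, 0 ≤ CV a c ∧ CV a c ≤ Θ)
    (hCT : ∀ a c : R, 0 ≤ CT a c ∧ CT a c ≤ Θ)
    (b : ℕ → R) (P : ℕ → EuclideanSpace ℝ R) (lam : ℕ → ℝ)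
    (hP0 : (∀ a : R, 0 ≤ P 0 a) ∧ ∑ a : R, P 0 a = 1)
    (hlam1 : 0 ≤ lam 1)
    (hPmem : ∀ t : ℕ, 1 ≤ t → (∀ a : R, 0 ≤ P t a) ∧ ∑ a : R, P t a = 1)
    (hPmin : ∀ t : ℕ, 1 ≤ t → ∀ Q : EuclideanSpace ℝ R,
      ((∀ a : R, 0 ≤ Q a) ∧ ∑ a : R, Q a = 1) →
      (∑ a : R, P t a * CR a) +
        lam t * ((∑ a : R, P t a * (CV a (b (t-1)) + CT a (b (t-1)))) - v) +
        (1/(2*α)) * ‖P t - P (t-1)‖^2 ≤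
      (∑ a : R, Q a * CR a) +
        lam t * ((∑ a : R, Q a * (CV a (b (t-1)) + CT a (b (t-1)))) - v) +
        (1/(2*α)) * ‖Q - P (t-1)‖^2)
    (hlam : ∀ t : ℕ, 1 ≤ t →
      lam (t+1) = max 0 (lam t + μ * ((∑ a : R, P t a * (CV a (b (t-1)) + CT a (b (t-1)))) - v)))
    (Ptilde : EuclideanSpace ℝ R) (η : ℝ) (hη : 0 < η)
    (hPtilde : (∀ a : R, 0 ≤ Ptilde a) ∧ ∑ a : R, Ptilde a = 1)
    (hSlater : ∀ c : R, (∑ a : R, Ptilde a * (CV a c + CT a c)) - v ≤ -η)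
    (ℵ T : ℕ) (hℵ : 1 ≤ ℵ) (hT : ℵ + 1 ≤ T)
    (hgt : lam (T - ℵ) < lam (T + 1)) :
    η * ∑ t ∈ Finset.Icc (T - ℵ) T, lam t ≤
      ((ℵ:ℝ) + 1) * (((1/2) * μ^2 * (4*Θ^2 + v^2)) / μ +
        (α/2) * (Fintype.card R : ℝ) * Θ^2 + Θ) + 1/α := by
  let cost (t : ℕ) (a : R) := CV a (b t) + CT a (b t)
  have hcost (t : ℕ) (a : R) : cost t a ∈ Set.Icc 0 (2 * Θ) :=
    ⟨add_nonneg (hCV a _).1 (hCT a _).1, by linarith [(hCV a (b t)).2, (hCT a (b t)).2]⟩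
  have halg : IsProximalPrimalDual (probSimplex R) (expectation CR)
      (fun t z => expectation (cost t) z - v) α μ P lam :=
    { mem := fun t => t.casesOn hP0 fun k => hPmem (k + 1) k.succ_pos
      isMinOn := fun t => isMinOn_iff.2 (hPmin (t + 1) t.succ_pos)
      dual_one_nonneg := hlam1
      dual_update := fun t => hlam (t + 1) t.succ_pos }
  have hbound := stmt14_general halg hα hμ (convexOn_expectation CR)
    (fun t => (convexOn_expectation (cost t)).add_const (-v)) hPtilde (fun t => hSlater (b t))
    (fun z hz => (sub_le_self _ (expectation_mem_Icc hz hCR).1).trans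
      (expectation_mem_Icc hPtilde hCR).2)
    (fun t z hz => sub_sq_le_sq_add_sq_s14 (expectation_mem_Icc hz (hcost t)) hv.le)
    (fun z hz => norm_sub_sq_le_two_of_mem_probSimplex hPtilde hz) hT hgt.le
  have hslack : 0 ≤ ((ℵ : ℝ) + 1) * (α / 2 * Fintype.card R * Θ ^ 2) := by positivity
  refine hbound.trans (sub_nonneg.1 (hslack.trans_eq ?_))
  field_simp
  ring
end
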